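/- The limsup as N → ∞ of the quantity inf_P ‖D_P | L₂‖ · (log N)^{-1/2}, where the infimum is taken over all N-point sets P in [0,1)², is at least 0.061. -/

import Mathlib

open MeasureTheory

noncomputable section

/-- The half-open unit square `[0,1) × [0,1)` in `ℝ × ℝ`. -/
def unitSq : Set (ℝ × ℝ) := Set.Ico (0:ℝ) 1 ×ˢ Set.Ico (0:ℝ) 1

/-- The discrepancy function of the point configuration `p`. -/
def disc (N : ℕ) (p : Fin N → ℝ × ℝ) (x : ℝ × ℝ) : ℝ :=
  (∑ i : Fin N, if 0 ≤ (p i).1 ∧ (p i).1 < x.1 ∧ 0 ≤ (p i).2 ∧ (p i).2 < x.2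
    then (1:ℝ) else 0) - N * x.1 * x.2

/-- The `L₂`-discrepancy `‖D_P | L₂‖ = (∫_{[0,1)²} D_P(x)² dx)^{1/2}`. -/
def L2disc (N : ℕ) (p : Fin N → ℝ × ℝ) : ℝ :=
  Real.sqrt (∫ x in unitSq, disc N p x ^ 2)

/-!
By Bessel's inequality, `‖D_P | L₂‖²` is for every `K` at least the energy of the projections of
`D_P` to the Haar functions supported on dyadic boxes of area `2⁻ᴷ`, `2⁻ᴷ⁻¹` and `2⁻ᴷ⁻²`.
Discarding the nonnegative interactions of distinct points in a box bounds this energy from below by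
a sum of `K + 1` groups of terms, one for each shape of boxes of area `2⁻ᴷ`, in which every point
contributes a function of its position relative to its box. For `N = 5 · 2ᵏ` and `K = k + 2` the
minimum of this function is at least `-1.06`: replacing squares by tangents turns it into a function
that is affine in each variable on every cell of a grid of squares of side `1 / 8`, and it suffices
to look at their corners. The resulting constant is
`√((25/16 · 21/16 - 5/4 · 1.06) / (256 log 2)) > 0.061`.

The `limsup` of an unbounded real sequence has the junk value `0`, so an upper bound of order
`(log N)^{1/2}` is needed as well. Symmetrized van der Corput sets provide it: their
discrepancy is, up to a bounded error, a sum of sawtooth functions, whose `L₂`-norm is controlled by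
halving the number of terms.
-/

section

open Finset

/-! ### The contribution of a single point -/

/-- The distance from `x` to the nearest integer. -/
def distInt (x : ℝ) : ℝ := |x - round x|

theorem distInt_nonneg (x : ℝ) : 0 ≤ distInt x := abs_nonneg _

theorem distInt_le_half (x : ℝ) : distInt x ≤ 1 / 2 := abs_sub_round x

theorem distInt_eq_min (x : ℝ) : distInt x = min (Int.fract x) (1 - Int.fract x) :=
  abs_sub_round_eq_min x

theorem distInt_eq_abs_sub {x : ℝ} {m : ℤ} (h : |x - m| ≤ 1 / 2) : distInt x = |x - m| := by
  refine le_antisymm (round_le x m) ?_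
  rcases eq_or_ne (round x) m with rfl | hne
  · rfl
  · have hsep : (1 : ℝ) ≤ |(round x : ℝ) - m| := by
      exact_mod_cast Int.one_le_abs (sub_ne_zero.mpr hne)
    have htri : |(round x : ℝ) - m| ≤ |x - round x| + |x - m| := by
      rw [abs_sub_comm x (round x)]
      exact abs_sub_le _ x _
    unfold distInt
    linarith

theorem distInt_add_intCast (x : ℝ) (m : ℤ) : distInt (x + m) = distInt x := by
  simp only [distInt, round_add_intCast, Int.cast_add, add_sub_add_right_eq_sub]

theorem distInt_neg (x : ℝ) : distInt (-x) = distInt x := by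
  have h : |-x - ((-round x : ℤ) : ℝ)| = |x - round x| := by
    rw [Int.cast_neg, neg_sub_neg, abs_sub_comm]
  rw [distInt_eq_abs_sub (h.trans_le (abs_sub_round x)), h, distInt]

theorem distInt_natCast_mul_distInt (k : ℕ) (x : ℝ) :
    distInt (k * distInt x) = distInt (k * x) := by
  have hsub : distInt (k * (x - round x)) = distInt (k * x) := by
    rw [← distInt_add_intCast (k * (x - round x)) (k * round x)]
    congr 1
    push_cast
    ring
  rw [← hsub, distInt.eq_def x]
  rcases abs_choice (x - round x) with h | h
  · rw [h]
  · rw [h, mul_neg, distInt_neg]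

theorem distInt_convexCombo {k : ℤ} {a b s t : ℝ} (ha : a ∈ Set.Icc (k / 2 : ℝ) ((k + 1) / 2))
    (hb : b ∈ Set.Icc (k / 2 : ℝ) ((k + 1) / 2)) (hs : 0 ≤ s) (ht : 0 ≤ t) (hst : s + t = 1) :
    distInt (s * a + t * b) = s * distInt a + t * distInt b := by
  have hmem : s * a + t * b ∈ Set.Icc (k / 2 : ℝ) ((k + 1) / 2) :=
    convex_Icc _ _ ha hb hs ht hst
  rcases Int.even_or_odd' k with ⟨m, rfl | rfl⟩
  · have hval : ∀ y ∈ Set.Icc (((2 * m : ℤ) : ℝ) / 2) (((2 * m : ℤ) + 1) / 2),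
        distInt y = y - m := fun y hy ↦ by
      push_cast at hy
      have habs : |y - m| = y - m := abs_of_nonneg (by linarith [hy.1])
      rw [distInt_eq_abs_sub (m := m) (by rw [habs]; linarith [hy.2]), habs]
    rw [hval _ ha, hval _ hb, hval _ hmem]
    linear_combination (m : ℝ) * hst
  · have hval : ∀ y ∈ Set.Icc (((2 * m + 1 : ℤ) : ℝ) / 2) (((2 * m + 1 : ℤ) + 1) / 2),
        distInt y = m + 1 - y := fun y hy ↦ by
      push_cast at hy
      have habs : |y - (m + 1 : ℤ)| = m + 1 - y := by
        push_cast
        rw [abs_of_nonpos (by linarith [hy.2])]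
        ring
      rw [distInt_eq_abs_sub (m := m + 1) (by rw [habs]; linarith [hy.1]), habs]
    rw [hval _ ha, hval _ hb, hval _ hmem]
    linear_combination -((m : ℝ) + 1) * hst

/-- The contribution of a single point to the averaged Haar energies, where `x` and `y` are its
coordinates in units of the sides of a dyadic box, and `ρ` is the number of points times the area of
this box. The inner sum runs over the shapes of boxes with area `2⁻ⁿ` in these units; the factor
`16` makes `1` the mean value of the product of the two distances. -/
def pointEnergy (M : ℕ) (ρ x y : ℝ) : ℝ :=
  ∑ n ∈ range M, (1 / 2 : ℝ) ^ n / (n + 1) * ∑ rs ∈ antidiagonal n,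
    ((16 * (distInt (2 ^ rs.1 * x) * distInt (2 ^ rs.2 * y))) ^ 2
      - 2 * (ρ * (1 / 2) ^ n) * (16 * (distInt (2 ^ rs.1 * x) * distInt (2 ^ rs.2 * y))))

/-- The minorant of `pointEnergy M ρ x y` obtained by replacing every square by its tangent at
`(c, d)`. It is affine in `x` and in `y` wherever all the distances involved are. -/
def tangentEnergy (M : ℕ) (ρ c d x y : ℝ) : ℝ :=
  ∑ n ∈ range M, (1 / 2 : ℝ) ^ n / (n + 1) * ∑ rs ∈ antidiagonal n,
    (2 * (16 * (distInt (2 ^ rs.1 * c) * distInt (2 ^ rs.2 * d)) - ρ * (1 / 2) ^ n)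
        * (16 * (distInt (2 ^ rs.1 * x) * distInt (2 ^ rs.2 * y)))
      - (16 * (distInt (2 ^ rs.1 * c) * distInt (2 ^ rs.2 * d))) ^ 2)

theorem tangentEnergy_le_pointEnergy (M : ℕ) (ρ c d x y : ℝ) :
    tangentEnergy M ρ c d x y ≤ pointEnergy M ρ x y := by
  have tangent_le (u w p : ℝ) : 2 * (u - p) * w - u ^ 2 ≤ w ^ 2 - 2 * p * w := by
    linarith [two_mul_le_add_sq u w]
  exact sum_le_sum fun n _ ↦ mul_le_mul_of_nonneg_left
    (sum_le_sum fun rs _ ↦ tangent_le _ _ _) (by positivity)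

theorem pointEnergy_distInt (M : ℕ) (ρ x y : ℝ) :
    pointEnergy M ρ (distInt x) (distInt y) = pointEnergy M ρ x y := by
  have h (r : ℕ) (z : ℝ) : distInt (2 ^ r * distInt z) = distInt (2 ^ r * z) := by
    exact_mod_cast distInt_natCast_mul_distInt (2 ^ r) z
  simp only [pointEnergy, h]

theorem tangentEnergy_swap (M : ℕ) (ρ c d x y : ℝ) :
    tangentEnergy M ρ c d x y = tangentEnergy M ρ d c y x := by
  unfold tangentEnergy
  refine sum_congr rfl fun n _ ↦ ?_
  rw [← Nat.sum_antidiagonal_swap]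
  simp only [Prod.fst_swap, Prod.snd_swap]
  congr! 2
  ring

theorem tangentEnergy_convexCombo_left {M : ℕ} {ρ c d a b y s t : ℝ} (hst : s + t = 1)
    (h : ∀ r < M, distInt (2 ^ r * (s * a + t * b)) =
      s * distInt (2 ^ r * a) + t * distInt (2 ^ r * b)) :
    tangentEnergy M ρ c d (s * a + t * b) y =
      s * tangentEnergy M ρ c d a y + t * tangentEnergy M ρ c d b y := by
  simp only [tangentEnergy, mul_sum, ← sum_add_distrib]
  refine sum_congr rfl fun n hn ↦ sum_congr rfl fun rs hrs ↦ ?_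
  have hr : rs.1 < M := (Nat.antidiagonal.fst_lt hrs).trans_le (mem_range.mp hn)
  rw [h rs.1 hr]
  obtain rfl : t = 1 - s := by linarith
  ring

theorem distInt_two_pow_mul_convexCombo {M r : ℕ} (hr : r < M) (i : ℕ) {s t : ℝ} (hs : 0 ≤ s)
    (ht : 0 ≤ t) (hst : s + t = 1) :
    distInt (2 ^ r * (s * (i / 2 ^ M) + t * ((i + 1) / 2 ^ M))) =
      s * distInt (2 ^ r * (i / 2 ^ M)) + t * distInt (2 ^ r * ((i + 1) / 2 ^ M)) := by
  obtain ⟨e, rfl⟩ := Nat.exists_eq_add_of_lt hr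
  have hscale (z : ℝ) : 2 ^ r * (z / 2 ^ (r + e + 1)) = z / 2 ^ e / 2 := by
    field_simp
    ring
  have hlow : (i / 2 ^ e : ℕ) * (2 : ℝ) ^ e ≤ i := by exact_mod_cast Nat.div_mul_le_self i (2 ^ e)
  have hupp : (i + 1 : ℝ) ≤ ((i / 2 ^ e : ℕ) + 1) * (2 : ℝ) ^ e := by
    exact_mod_cast Nat.lt_div_mul_add (a := i) (b := 2 ^ e) (by positivity) |>.trans_eq (by ring)
  have hmem {z : ℝ} (h₁ : i ≤ z) (h₂ : z ≤ i + 1) : 2 ^ r * (z / 2 ^ (r + e + 1)) ∈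
      Set.Icc (((i / 2 ^ e : ℕ) : ℤ) / 2 : ℝ) ((((i / 2 ^ e : ℕ) : ℤ) + 1) / 2) := by
    rw [hscale, Int.cast_natCast]
    constructor <;> gcongr
    · rw [le_div_iff₀ (by positivity)]
      exact hlow.trans h₁
    · rw [div_le_iff₀ (by positivity)]
      exact h₂.trans hupp
  rw [← distInt_convexCombo (hmem le_rfl (by linarith)) (hmem (by linarith) le_rfl) hs ht hst]
  congr 1
  ring

theorem le_tangentEnergy_of_corners {M i j : ℕ} {ρ c d x y B : ℝ}
    (hx : x ∈ Set.Icc (i / 2 ^ M : ℝ) ((i + 1) / 2 ^ M))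
    (hy : y ∈ Set.Icc (j / 2 ^ M : ℝ) ((j + 1) / 2 ^ M))
    (h : ∀ k ∈ ({i, i + 1} : Set ℕ), ∀ l ∈ ({j, j + 1} : Set ℕ),
      B ≤ tangentEnergy M ρ c d (k / 2 ^ M) (l / 2 ^ M)) :
    B ≤ tangentEnergy M ρ c d x y := by
  have endpoints {i : ℕ} {c d z w : ℝ} (hz : z ∈ Set.Icc (i / 2 ^ M : ℝ) ((i + 1) / 2 ^ M))
      (h : ∀ k ∈ ({i, i + 1} : Set ℕ), B ≤ tangentEnergy M ρ c d (k / 2 ^ M) w) :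
      B ≤ tangentEnergy M ρ c d z w := by
    rw [← segment_eq_Icc (by gcongr; linarith)] at hz
    obtain ⟨s, t, hs, ht, hst, rfl⟩ := hz
    simp only [smul_eq_mul]
    rw [tangentEnergy_convexCombo_left hst
      fun r hr ↦ distInt_two_pow_mul_convexCombo hr i hs ht hst]
    calc B = s * B + t * B := by rw [← add_mul, hst, one_mul]
      _ ≤ _ := by
        gcongr
        · exact h i (by simp)
        · exact_mod_cast h (i + 1) (by simp)
  refine endpoints hx fun k hk ↦ ?_
  rw [tangentEnergy_swap]
  refine endpoints hy fun l hl ↦ ?_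
  rw [← tangentEnergy_swap]
  exact h k hk l hl

/-- The tangent points for the four dyadic intervals of length `1 / 8` in `[0, 1 / 2]`, found by a
numerical search. -/
def tangentPoint : ℕ → ℝ
  | 0 => 7 / 80
  | 1 => 7 / 40
  | 2 => 5 / 16
  | _ => 3 / 8

theorem neg_le_tangentEnergy_corner {i j : ℕ} (hi : i < 4) (hj : j < 4) :
    ∀ k ∈ ({i, i + 1} : Set ℕ), ∀ l ∈ ({j, j + 1} : Set ℕ),
      -1.06 ≤
        tangentEnergy 3 (5 / 4) (tangentPoint i) (tangentPoint j) (k / 2 ^ 3) (l / 2 ^ 3) := by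
  simp only [Set.mem_insert_iff, Set.mem_singleton_iff, forall_eq_or_imp, forall_eq,
    tangentEnergy, sum_range_succ, range_zero, sum_empty, Nat.antidiagonal_succ,
    Nat.antidiagonal_zero, sum_cons, sum_map, map_singleton, sum_singleton]
  interval_cases i <;> interval_cases j <;> norm_num [tangentPoint, distInt]

theorem exists_mem_Icc_div_eight {x : ℝ} (h₀ : 0 ≤ x) (h₁ : x ≤ 1 / 2) :
    ∃ i < 4, x ∈ Set.Icc ((i : ℕ) / 2 ^ 3 : ℝ) ((i + 1) / 2 ^ 3) := by
  by_contra! hno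
  have hstep (i : ℕ) (hi : i < 4) (h : (i / 2 ^ 3 : ℝ) ≤ x) : (i + 1) / 2 ^ 3 < x := by
    by_contra! h'
    exact hno i hi ⟨h, h'⟩
  have h8 := hstep 0 (by norm_num) (by simpa)
  have h4 := hstep 1 (by norm_num) (by norm_num at *; linarith)
  have h38 := hstep 2 (by norm_num) (by norm_num at *; linarith)
  have h2 := hstep 3 (by norm_num) (by norm_num at *; linarith)
  norm_num at h2
  linarith

theorem neg_le_pointEnergy (x y : ℝ) : -1.06 ≤ pointEnergy 3 (5 / 4) x y := by
  rw [← pointEnergy_distInt]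
  obtain ⟨i, hi, hx⟩ := exists_mem_Icc_div_eight (distInt_nonneg x) (distInt_le_half x)
  obtain ⟨j, hj, hy⟩ := exists_mem_Icc_div_eight (distInt_nonneg y) (distInt_le_half y)
  exact (le_tangentEnergy_of_corners hx hy (neg_le_tangentEnergy_corner hi hj)).trans
    (tangentEnergy_le_pointEnergy ..)

/-! ### Haar functions -/

/-- The Haar mother wavelet. -/
def haarMother (y : ℝ) : ℝ :=
  (Set.Ico 0 (1 / 2)).indicator 1 y - (Set.Ico (1 / 2) 1).indicator 1 y

/-- The Haar function of level `j` supported on `[m / 2ʲ, (m + 1) / 2ʲ)`, with values `±1` there. -/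
def haar (j m : ℕ) (x : ℝ) : ℝ := haarMother (2 ^ j * x - m)

theorem haarMother_of_mem_Ico_zero_half {y : ℝ} (hy : y ∈ Set.Ico (0 : ℝ) (1 / 2)) :
    haarMother y = 1 := by
  have hy' : y ∉ Set.Ico (1 / 2 : ℝ) 1 := fun h ↦ hy.2.not_ge h.1
  rw [haarMother, Set.indicator_of_mem hy, Set.indicator_of_notMem hy', Pi.one_apply, sub_zero]

theorem haarMother_of_mem_Ico_half_one {y : ℝ} (hy : y ∈ Set.Ico (1 / 2 : ℝ) 1) :
    haarMother y = -1 := by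
  have hy' : y ∉ Set.Ico (0 : ℝ) (1 / 2) := fun h ↦ h.2.not_ge hy.1
  rw [haarMother, Set.indicator_of_notMem hy', Set.indicator_of_mem hy, Pi.one_apply, zero_sub]

theorem haarMother_eq_zero {y : ℝ} (hy : y ∉ Set.Ico (0 : ℝ) 1) : haarMother y = 0 := by
  have h₁ : y ∉ Set.Ico (0 : ℝ) (1 / 2) := fun h ↦ hy ⟨h.1, by linarith [h.2]⟩
  have h₂ : y ∉ Set.Ico (1 / 2 : ℝ) 1 := fun h ↦ hy ⟨by linarith [h.1], h.2⟩
  rw [haarMother, Set.indicator_of_notMem h₁, Set.indicator_of_notMem h₂, sub_zero]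

theorem abs_haarMother_le_one (y : ℝ) : |haarMother y| ≤ 1 := by
  by_cases hy : y ∈ Set.Ico (0 : ℝ) 1
  · rcases lt_or_ge y (1 / 2) with h | h
    · simp [haarMother_of_mem_Ico_zero_half ⟨hy.1, h⟩]
    · simp [haarMother_of_mem_Ico_half_one ⟨h, hy.2⟩]
  · simp [haarMother_eq_zero hy]

theorem measurable_haarMother : Measurable haarMother :=
  (measurable_one.indicator measurableSet_Ico).sub (measurable_one.indicator measurableSet_Ico)

theorem haarMother_eq_floor (y : ℝ) : haarMother y = haarMother (⌊2 * y⌋ / 2) := by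
  have hle (z : ℤ) : (z / 2 : ℝ) ≤ y ↔ (z / 2 : ℝ) ≤ ⌊2 * y⌋ / 2 := by
    rw [div_le_div_iff_of_pos_right two_pos, Int.cast_le, Int.le_floor, div_le_iff₀' two_pos]
  have h₀ : 0 ≤ y ↔ (0 : ℝ) ≤ ⌊2 * y⌋ / 2 := by simpa using hle 0
  have h₁ : y < 1 / 2 ↔ (⌊2 * y⌋ / 2 : ℝ) < 1 / 2 := by simpa using (hle 1).not
  have h₂ : y < 1 ↔ (⌊2 * y⌋ / 2 : ℝ) < 1 := by simpa using (hle 2).not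
  simp only [haarMother, Set.indicator_apply, Set.mem_Ico, ← not_lt (b := (1 / 2 : ℝ)), h₀, h₁, h₂,
    Pi.one_apply]

theorem integral_mul_haarMother {g : ℝ → ℝ} (hg : IntegrableOn g (Set.Ico 0 1)) :
    ∫ y, g y * haarMother y =
      (∫ y in Set.Ico 0 (1 / 2), g y) - ∫ y in Set.Ico (1 / 2) 1, g y := by
  have hg₁ : IntegrableOn g (Set.Ico 0 (1 / 2)) :=
    hg.mono_set (Set.Ico_subset_Ico_right (by norm_num))
  have hg₂ : IntegrableOn g (Set.Ico (1 / 2) 1) :=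
    hg.mono_set (Set.Ico_subset_Ico_left (by norm_num))
  rw [← integral_indicator measurableSet_Ico, ← integral_indicator measurableSet_Ico,
    ← integral_sub (hg₁.integrable_indicator measurableSet_Ico)
      (hg₂.integrable_indicator measurableSet_Ico)]
  simp only [haarMother, mul_sub, ← Set.indicator_mul_right, Pi.one_apply, mul_one]

theorem integral_affine_mul_haarMother (a b : ℝ) :
    ∫ y, (a * y + b) * haarMother y = -a / 4 := by
  have hcont : Continuous fun y : ℝ ↦ a * y + b := by fun_prop
  have hint : IntegrableOn (fun y : ℝ ↦ a * y + b) (Set.Ico 0 1) :=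
    hcont.integrableOn_Icc.mono_set Set.Ico_subset_Icc_self
  rw [integral_mul_haarMother hint,
    integral_Ico_eq_integral_Ioc, integral_Ico_eq_integral_Ioc,
    ← intervalIntegral.integral_of_le (by norm_num),
    ← intervalIntegral.integral_of_le (by norm_num), intervalIntegral.integral_add,
    intervalIntegral.integral_add]
  · simp only [mul_comm a, intervalIntegral.integral_mul_const, integral_id,
      intervalIntegral.integral_const, smul_eq_mul]
    ring
  all_goals exact Continuous.intervalIntegrable (by fun_prop) _ _

theorem integral_haarMother_mul_self : ∫ y, haarMother y * haarMother y = 1 := by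
  have hint : IntegrableOn haarMother (Set.Ico 0 1) :=
    Measure.integrableOn_of_bounded (M := 1) (by simp) measurable_haarMother.aestronglyMeasurable
      (ae_of_all _ abs_haarMother_le_one)
  rw [integral_mul_haarMother hint,
    setIntegral_congr_fun measurableSet_Ico fun y hy ↦ haarMother_of_mem_Ico_zero_half hy,
    setIntegral_congr_fun measurableSet_Ico fun y hy ↦ haarMother_of_mem_Ico_half_one hy]
  norm_num

theorem setIntegral_Ico_indicator_Ioi (a b q : ℝ) :
    ∫ y in Set.Ico a b, (Set.Ioi q).indicator 1 y = max (b - max q a) 0 := by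
  rw [integral_Ico_eq_integral_Ioo, integral_indicator_one measurableSet_Ioi,
    measureReal_restrict_apply measurableSet_Ioi, ← Set.Ioi_inter_Iio, ← Set.inter_assoc,
    Set.Ioi_inter_Ioi, Set.Ioi_inter_Iio, Real.volume_real_Ioo]

theorem integral_indicator_Ioi_mul_haarMother (q : ℝ) :
    ∫ y, (Set.Ioi q).indicator 1 y * haarMother y = -(Set.Ico 0 1).indicator distInt q := by
  have hint : IntegrableOn ((Set.Ioi q).indicator (1 : ℝ → ℝ)) (Set.Ico 0 1) :=
    (integrableOn_const (C := (1 : ℝ)) (by simp)).indicator measurableSet_Ioi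
  rw [integral_mul_haarMother hint,
    setIntegral_Ico_indicator_Ioi, setIntegral_Ico_indicator_Ioi]
  by_cases hq : q ∈ Set.Ico (0 : ℝ) 1
  · rw [Set.indicator_of_mem hq, distInt_eq_min, Int.fract_eq_self.mpr hq]
    grind
  · rw [Set.indicator_of_notMem hq]
    grind

theorem integral_mul_haar (f : ℝ → ℝ) {j m : ℕ} (hm : m < 2 ^ j) :
    ∫ x in Set.Ico 0 1, f x * haar j m x =
      (1 / 2) ^ j * ∫ y, f ((y + m) / 2 ^ j) * haarMother y := by
  have hm' : (m : ℝ) + 1 ≤ 2 ^ j := by exact_mod_cast hm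
  have hsupp (x : ℝ) (hx : x ∉ Set.Ico (0 : ℝ) 1) : f x * haar j m x = 0 := by
    refine mul_eq_zero_of_right _ (haarMother_eq_zero fun h ↦ hx ⟨?_, ?_⟩)
    · exact nonneg_of_mul_nonneg_right (by linarith [h.1, m.cast_nonneg (α := ℝ)]) (by positivity)
    · exact lt_of_mul_lt_mul_left (by linarith [h.2]) (by positivity : (0 : ℝ) ≤ 2 ^ j)
  rw [setIntegral_eq_integral_of_forall_compl_eq_zero hsupp,
    ← integral_sub_right_eq_self (fun y ↦ f ((y + m) / 2 ^ j) * haarMother y) (m : ℝ)]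
  have hscale := Measure.integral_comp_mul_left
    (fun y ↦ f ((y - m + m) / 2 ^ j) * haarMother (y - m)) (2 ^ j)
  simpa [haar, abs_of_pos] using hscale

section Haar

variable {j m : ℕ}

theorem integral_haar (hm : m < 2 ^ j) : ∫ x in Set.Ico 0 1, haar j m x = 0 := by
  have h : ∫ y, haarMother y = 0 := by simpa using integral_affine_mul_haarMother 0 1
  simpa [h] using integral_mul_haar (fun _ ↦ 1) hm

theorem integral_id_mul_haar (hm : m < 2 ^ j) :
    ∫ x in Set.Ico 0 1, x * haar j m x = -(1 / 4) * (1 / 4) ^ j := by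
  have haffine (y : ℝ) : (y + m) / 2 ^ j = 1 / 2 ^ j * y + m / 2 ^ j := by ring
  simp only [integral_mul_haar (fun x ↦ x) hm, haffine, integral_affine_mul_haarMother]
  rw [show (1 / 4 : ℝ) = 1 / 2 * (1 / 2) by norm_num, mul_pow, one_div_pow]
  ring

theorem integral_haar_mul_self (hm : m < 2 ^ j) :
    ∫ x in Set.Ico 0 1, haar j m x * haar j m x = (1 / 2) ^ j := by
  have hself (y : ℝ) : haar j m ((y + m) / 2 ^ j) = haarMother y := by
    rw [haar, mul_div_cancel₀ _ (by positivity), add_sub_cancel_right]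
  rw [integral_mul_haar (haar j m) hm]
  simp only [hself, integral_haarMother_mul_self, mul_one]

theorem integral_indicator_Ioi_mul_haar {p : ℝ} (hp : 0 ≤ p) (hm : m < 2 ^ j) :
    ∫ x in Set.Ico 0 1, (Set.Ioi p).indicator 1 x * haar j m x =
      -(1 / 2) ^ j * if ⌊2 ^ j * p⌋₊ = m then distInt (2 ^ j * p) else 0 := by
  have hstep (y : ℝ) : (Set.Ioi p).indicator 1 ((y + m) / 2 ^ j) =
      (Set.Ioi (2 ^ j * p - m)).indicator (1 : ℝ → ℝ) y := by
    simp only [Set.indicator_apply, Set.mem_Ioi, lt_div_iff₀' (show (0 : ℝ) < 2 ^ j by positivity),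
      sub_lt_iff_lt_add, Pi.one_apply]
  have hmem : 2 ^ j * p - m ∈ Set.Ico (0 : ℝ) 1 ↔ ⌊2 ^ j * p⌋₊ = m := by
    rw [Nat.floor_eq_iff (by positivity), Set.mem_Ico, sub_nonneg, sub_lt_iff_lt_add']
  have hper : distInt (2 ^ j * p - m) = distInt (2 ^ j * p) := by
    rw [← distInt_add_intCast (2 ^ j * p - m) m]
    simp
  simp only [integral_mul_haar _ hm, hstep, integral_indicator_Ioi_mul_haarMother]
  simp only [Set.indicator_apply, hmem, hper]
  ring

theorem haar_eq_zero {x : ℝ} (h : ⌊2 ^ j * x⌋ ≠ m) : haar j m x = 0 := by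
  refine haarMother_eq_zero fun hx ↦ h (Int.floor_eq_iff.mpr ?_)
  exact_mod_cast And.intro (sub_nonneg.mp hx.1) (sub_lt_iff_lt_add'.mp hx.2)

theorem haar_mul_haar_of_lt {j' m' : ℕ} (hj : j < j') (x : ℝ) :
    haar j m x * haar j' m' x = haar j m (m' / 2 ^ j') * haar j' m' x := by
  by_cases hx : ⌊2 ^ j' * x⌋ = m'
  · obtain ⟨e, rfl⟩ := Nat.exists_eq_add_of_lt hj
    have hfloor (z : ℝ) (hz : ⌊2 ^ (j + e + 1) * z⌋ = m') :
        ⌊2 * (2 ^ j * z - m)⌋ = m' / 2 ^ e - 2 * m := by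
      have hdiv : 2 * (2 ^ j * z - m) = 2 ^ (j + e + 1) * z / (2 ^ e : ℕ) - (2 * m : ℕ) := by
        push_cast
        field_simp
        ring
      rw [hdiv, Int.floor_sub_natCast, Int.floor_div_natCast, hz]
      push_cast
      rfl
    congr 1
    rw [haar, haar, haarMother_eq_floor, haarMother_eq_floor (2 ^ j * (_ / _) - _), hfloor x hx,
      hfloor]
    rw [mul_div_cancel₀ _ (by positivity), Int.floor_natCast]
  · rw [haar_eq_zero hx, mul_zero, mul_zero]

theorem integral_haar_mul_haar {j' m' : ℕ} (hm : m < 2 ^ j) (hm' : m' < 2 ^ j') :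
    ∫ x in Set.Ico 0 1, haar j m x * haar j' m' x =
      if j = j' ∧ m = m' then (1 / 2) ^ j else 0 := by
  rcases lt_trichotomy j j' with hj | rfl | hj
  · simp [haar_mul_haar_of_lt hj, integral_const_mul, integral_haar hm', hj.ne]
  · rcases eq_or_ne m m' with rfl | hne
    · simp [integral_haar_mul_self hm]
    · have hdisj (x : ℝ) : haar j m x * haar j m' x = 0 := by
        by_cases hx : ⌊2 ^ j * x⌋ = m
        · rw [haar_eq_zero (m := m') (by grind), mul_zero]
        · rw [haar_eq_zero hx, zero_mul]
      simp [hdisj, hne]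
  · simp [mul_comm (haar j m _), haar_mul_haar_of_lt hj, integral_const_mul, integral_haar hm,
      hj.ne']

end Haar

/-! ### The lower bound -/

theorem integrable_mul_of_memLp_two {α : Type*} [MeasurableSpace α] {μ : Measure α}
    {u v : α → ℝ} (hu : MemLp u 2 μ) (hv : MemLp v 2 μ) : Integrable (fun x ↦ u x * v x) μ :=
  hu.integrable_mul hv

theorem sum_sq_integral_mul_div_le {α ι : Type*} [DecidableEq ι] [MeasurableSpace α]
    {μ : Measure α} {s : Finset ι} {f : α → ℝ} {g : ι → α → ℝ} {A : ι → ℝ} (hf : MemLp f 2 μ)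
    (hg : ∀ i ∈ s, MemLp (g i) 2 μ)
    (horth : ∀ i ∈ s, ∀ j ∈ s, ∫ x, g i x * g j x ∂μ = if i = j then A i else 0) :
    ∑ i ∈ s, (∫ x, f x * g i x ∂μ) ^ 2 / A i ≤ ∫ x, f x ^ 2 ∂μ := by
  let c (i : ι) : ℝ := (∫ x, f x * g i x ∂μ) / A i
  have hG : MemLp (fun x ↦ ∑ i ∈ s, c i * g i x) 2 μ :=
    memLp_finsetSum s fun i hi ↦ (hg i hi).const_mul (c i)
  have hfG : ∫ x, f x * ∑ i ∈ s, c i * g i x ∂μ = ∑ i ∈ s, (∫ x, f x * g i x ∂μ) ^ 2 / A i := by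
    simp only [mul_sum, mul_left_comm (f _)]
    rw [integral_finsetSum s fun i hi ↦ (integrable_mul_of_memLp_two hf (hg i hi)).const_mul (c i)]
    refine sum_congr rfl fun i _ ↦ ?_
    rw [integral_const_mul]
    ring
  have hGg {j : ι} (hj : j ∈ s) : ∫ x, (∑ i ∈ s, c i * g i x) * g j x ∂μ = c j * A j := by
    simp only [sum_mul, mul_assoc]
    rw [integral_finsetSum s fun i hi ↦
      (integrable_mul_of_memLp_two (hg i hi) (hg j hj)).const_mul (c i)]
    simp +contextual [integral_const_mul, horth _ _ j hj, hj]
  have hGG : ∫ x, (∑ i ∈ s, c i * g i x) ^ 2 ∂μ = ∑ i ∈ s, (∫ x, f x * g i x ∂μ) ^ 2 / A i := by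
    simp only [sq (∑ _ ∈ s, _), mul_sum _ _ (∑ _ ∈ s, _), mul_left_comm (∑ _ ∈ s, _)]
    rw [integral_finsetSum s fun i hi ↦ (integrable_mul_of_memLp_two hG (hg i hi)).const_mul (c i)]
    refine sum_congr rfl fun i hi ↦ ?_
    rw [integral_const_mul, hGg hi]
    rcases eq_or_ne (A i) 0 with hA | hA <;> simp only [c]
    · simp [hA]
    · field_simp
  have hexpand : ∫ x, (f x - ∑ i ∈ s, c i * g i x) ^ 2 ∂μ =
      ∫ x, f x ^ 2 ∂μ - ∑ i ∈ s, (∫ x, f x * g i x ∂μ) ^ 2 / A i := by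
    have hcross := (integrable_mul_of_memLp_two hf hG).const_mul 2
    have hfst : Integrable (fun x ↦ f x ^ 2 - 2 * (f x * ∑ i ∈ s, c i * g i x)) μ :=
      hf.integrable_sq.sub hcross
    simp only [sub_sq, mul_assoc]
    rw [integral_add hfst hG.integrable_sq, integral_sub hf.integrable_sq hcross,
      integral_const_mul, hfG, hGG]
    ring
  exact sub_nonneg.mp (hexpand ▸ integral_nonneg fun x ↦ sq_nonneg _)

theorem setIntegral_unitSq_mul (g h : ℝ → ℝ) :
    ∫ x in unitSq, g x.1 * h x.2 = (∫ t in Set.Ico 0 1, g t) * ∫ t in Set.Ico 0 1, h t :=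
  setIntegral_prod_mul g h _ _

theorem measurableSet_unitSq : MeasurableSet unitSq := measurableSet_Ico.prod measurableSet_Ico

instance isFiniteMeasure_restrict_unitSq : IsFiniteMeasure (volume.restrict unitSq) := by
  rw [unitSq, Measure.volume_eq_prod, ← Measure.prod_restrict]
  infer_instance

theorem memLp_mul_unitSq {g h : ℝ → ℝ} (hg : Measurable g) (hh : Measurable h)
    (hg₁ : ∀ t ∈ Set.Ico (0 : ℝ) 1, |g t| ≤ 1) (hh₁ : ∀ t ∈ Set.Ico (0 : ℝ) 1, |h t| ≤ 1)
    (q : ENNReal) : MemLp (fun x : ℝ × ℝ ↦ g x.1 * h x.2) q (volume.restrict unitSq) := by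
  refine .of_bound (by fun_prop) 1 (ae_restrict_of_forall_mem measurableSet_unitSq fun x hx ↦ ?_)
  rw [norm_mul]
  exact mul_le_one₀ (hg₁ _ hx.1) (abs_nonneg _) (hh₁ _ hx.2)

/-- The tensor product Haar function of shape `J` at position `m`, supported on the dyadic box with
sides `2⁻ʲ`, `j` being a component of `J`. -/
def haarProd (J m : ℕ × ℕ) (x : ℝ × ℝ) : ℝ := haar J.1 m.1 x.1 * haar J.2 m.2 x.2

/-- The positions of the dyadic boxes of shape `J` in the unit square. -/
def haarIndex (J : ℕ × ℕ) : Finset (ℕ × ℕ) := range (2 ^ J.1) ×ˢ range (2 ^ J.2)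

theorem card_haarIndex (J : ℕ × ℕ) : #(haarIndex J) = 2 ^ (J.1 + J.2) := by
  rw [haarIndex, card_product, card_range, card_range, pow_add]

theorem abs_haar_le_one (j m : ℕ) (x : ℝ) : |haar j m x| ≤ 1 := abs_haarMother_le_one _

theorem measurable_haar (j m : ℕ) : Measurable (haar j m) :=
  measurable_haarMother.comp (by fun_prop)

theorem memLp_haarProd (J m : ℕ × ℕ) (q : ENNReal) :
    MemLp (haarProd J m) q (volume.restrict unitSq) :=
  memLp_mul_unitSq (measurable_haar _ _) (measurable_haar _ _) (fun _ _ ↦ abs_haar_le_one _ _ _)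
    (fun _ _ ↦ abs_haar_le_one _ _ _) q

theorem setIntegral_haarProd_mul_haarProd {J J' m m' : ℕ × ℕ} (hm : m ∈ haarIndex J)
    (hm' : m' ∈ haarIndex J') :
    ∫ x in unitSq, haarProd J m x * haarProd J' m' x =
      if J = J' ∧ m = m' then (1 / 2) ^ (J.1 + J.2) else 0 := by
  simp only [haarIndex, mem_product, mem_range] at hm hm'
  simp only [haarProd, mul_mul_mul_comm (haar J.1 _ _)]
  rw [setIntegral_unitSq_mul (fun t ↦ haar J.1 m.1 t * haar J'.1 m'.1 t)
      fun t ↦ haar J.2 m.2 t * haar J'.2 m'.2 t,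
    integral_haar_mul_haar hm.1 hm'.1, integral_haar_mul_haar hm.2 hm'.2, ite_zero_mul_ite_zero,
    pow_add]
  refine if_congr ?_ rfl rfl
  simp only [Prod.ext_iff]
  tauto

/-- The squared `L₂`-norm of the projection of `f` to the span of the Haar functions of shape
`J`. -/
def haarEnergy (f : ℝ × ℝ → ℝ) (J : ℕ × ℕ) : ℝ :=
  ∑ m ∈ haarIndex J, (∫ x in unitSq, f x * haarProd J m x) ^ 2 / (1 / 2) ^ (J.1 + J.2)

theorem haarEnergy_nonneg (f : ℝ × ℝ → ℝ) (J : ℕ × ℕ) : 0 ≤ haarEnergy f J :=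
  sum_nonneg fun _ _ ↦ by positivity

theorem sum_haarEnergy_le {f : ℝ × ℝ → ℝ} (hf : MemLp f 2 (volume.restrict unitSq))
    (S : Finset (ℕ × ℕ)) : ∑ J ∈ S, haarEnergy f J ≤ ∫ x in unitSq, f x ^ 2 := by
  have horth (i) (hi : i ∈ S.sigma haarIndex) (j) (hj : j ∈ S.sigma haarIndex) :
      ∫ x in unitSq, haarProd i.1 i.2 x * haarProd j.1 j.2 x =
        if i = j then (1 / 2) ^ (i.1.1 + i.1.2) else 0 := by
    rw [setIntegral_haarProd_mul_haarProd (mem_sigma.mp hi).2 (mem_sigma.mp hj).2]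
    exact if_congr (by rw [Sigma.ext_iff, heq_eq_eq]) rfl rfl
  simpa only [haarEnergy, sum_sigma'] using
    sum_sq_integral_mul_div_le hf (fun i _ ↦ memLp_haarProd i.1 i.2 2) horth

theorem card_mul_sq_add_sum_le_sum_sq {ι κ : Type*} [DecidableEq κ] {s : Finset ι} {B : Finset κ}
    {β : ι → κ} (hβ : ∀ i ∈ s, β i ∈ B) {V : ι → ℝ} (hV : ∀ i ∈ s, 0 ≤ V i) (c : ℝ) :
    #B * c ^ 2 + ∑ i ∈ s, (V i ^ 2 - 2 * c * V i) ≤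
      ∑ b ∈ B, (∑ i ∈ s with β i = b, V i - c) ^ 2 := by
  rw [← sum_fiberwise_of_maps_to hβ, ← nsmul_eq_mul, ← sum_const, ← sum_add_distrib]
  refine sum_le_sum fun b _ ↦ ?_
  rw [sum_sub_distrib, ← mul_sum]
  have hsq : ∑ i ∈ s with β i = b, V i ^ 2 ≤ (∑ i ∈ s with β i = b, V i) ^ 2 :=
    sum_sq_le_sq_sum_of_nonneg fun i hi ↦ hV i (mem_of_mem_filter i hi)
  linarith [sub_sq (∑ i ∈ s with β i = b, V i) c]

section LowerBound

variable {N : ℕ} {p : Fin N → ℝ × ℝ}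

theorem disc_eq (hp : ∀ i, p i ∈ unitSq) (x : ℝ × ℝ) :
    disc N p x = ∑ i, (Set.Ioi (p i).1).indicator 1 x.1 * (Set.Ioi (p i).2).indicator 1 x.2
      - N * (x.1 * x.2) := by
  have hnonneg (i : Fin N) : 0 ≤ (p i).1 ∧ 0 ≤ (p i).2 := ⟨(hp i).1.1, (hp i).2.1⟩
  simp only [disc, Set.indicator_apply, Set.mem_Ioi, Pi.one_apply, ite_zero_mul_ite_zero, mul_one,
    hnonneg, true_and, mul_assoc]

theorem memLp_indicator_Ioi_mul (a b : ℝ) (q : ENNReal) :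
    MemLp (fun x : ℝ × ℝ ↦ (Set.Ioi a).indicator 1 x.1 * (Set.Ioi b).indicator (1 : ℝ → ℝ) x.2) q
      (volume.restrict unitSq) := by
  have hle (a t : ℝ) : |(Set.Ioi a).indicator (1 : ℝ → ℝ) t| ≤ 1 := by
    rw [Set.indicator_apply]
    split_ifs <;> simp
  exact memLp_mul_unitSq (measurable_one.indicator measurableSet_Ioi)
    (measurable_one.indicator measurableSet_Ioi) (fun t _ ↦ hle a t) (fun t _ ↦ hle b t) q

theorem memLp_fst_mul_snd (q : ENNReal) :
    MemLp (fun x : ℝ × ℝ ↦ x.1 * x.2) q (volume.restrict unitSq) := by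
  have hle : ∀ t ∈ Set.Ico (0 : ℝ) 1, |t| ≤ 1 := fun t ht ↦ (abs_of_nonneg ht.1).trans_le ht.2.le
  exact memLp_mul_unitSq measurable_id measurable_id hle hle q

theorem memLp_disc (hp : ∀ i, p i ∈ unitSq) (q : ENNReal) :
    MemLp (disc N p) q (volume.restrict unitSq) := by
  rw [funext (disc_eq hp)]
  exact (memLp_finsetSum _ fun i _ ↦ memLp_indicator_Ioi_mul _ _ q).sub
    ((memLp_fst_mul_snd q).const_mul _)

/-- The position of the dyadic box of shape `J` that contains `x`. -/
def boxOf (J : ℕ × ℕ) (x : ℝ × ℝ) : ℕ × ℕ := (⌊2 ^ J.1 * x.1⌋₊, ⌊2 ^ J.2 * x.2⌋₊)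

theorem boxOf_mem_haarIndex (J : ℕ × ℕ) {x : ℝ × ℝ} (hx : x ∈ unitSq) :
    boxOf J x ∈ haarIndex J := by
  have hlt (j : ℕ) {t : ℝ} (ht : t ∈ Set.Ico (0 : ℝ) 1) : ⌊2 ^ j * t⌋₊ < 2 ^ j := by
    rw [Nat.floor_lt (mul_nonneg (by positivity) ht.1)]
    push_cast
    exact mul_lt_of_lt_one_right (by positivity) ht.2
  simp only [haarIndex, boxOf, mem_product, mem_range]
  exact ⟨hlt _ hx.1, hlt _ hx.2⟩

/-- Up to the area of the box, the Haar coefficient of shape `J` of the counting function of the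
single point `x`. -/
def tent (J : ℕ × ℕ) (x : ℝ × ℝ) : ℝ := distInt (2 ^ J.1 * x.1) * distInt (2 ^ J.2 * x.2)

theorem setIntegral_disc_mul_haarProd (hp : ∀ i, p i ∈ unitSq) {J m : ℕ × ℕ}
    (hm : m ∈ haarIndex J) :
    ∫ x in unitSq, disc N p x * haarProd J m x = (1 / 2) ^ (J.1 + J.2) *
      (∑ i with boxOf J (p i) = m, tent J (p i) - N * (1 / 2) ^ (J.1 + J.2) / 16) := by
  have hm' := mem_product.mp hm
  simp only [mem_range] at hm'
  have hcount (i : Fin N) : ∫ x in unitSq, ((Set.Ioi (p i).1).indicator 1 x.1 *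
      (Set.Ioi (p i).2).indicator 1 x.2) * haarProd J m x =
        (1 / 2) ^ (J.1 + J.2) * if boxOf J (p i) = m then tent J (p i) else 0 := by
    simp only [haarProd, mul_mul_mul_comm (Set.indicator _ _ _)]
    rw [setIntegral_unitSq_mul (fun t ↦ (Set.Ioi (p i).1).indicator 1 t * haar J.1 m.1 t)
        fun t ↦ (Set.Ioi (p i).2).indicator 1 t * haar J.2 m.2 t,
      integral_indicator_Ioi_mul_haar (hp i).1.1 hm'.1,
      integral_indicator_Ioi_mul_haar (hp i).2.1 hm'.2, mul_mul_mul_comm, ite_zero_mul_ite_zero,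
      neg_mul_neg, pow_add]
    simp only [boxOf, tent, Prod.ext_iff]
  have hvol : ∫ x in unitSq, (x.1 * x.2) * haarProd J m x =
      ((1 / 2) ^ (J.1 + J.2)) ^ 2 / 16 := by
    simp only [haarProd, mul_mul_mul_comm _ _ (haar J.1 _ _)]
    rw [setIntegral_unitSq_mul (fun t ↦ t * haar J.1 m.1 t) fun t ↦ t * haar J.2 m.2 t,
      integral_id_mul_haar hm'.1, integral_id_mul_haar hm'.2, ← pow_mul, mul_comm _ 2, pow_mul,
      pow_add]
    norm_num
    ring
  have hint (i : Fin N) := integrable_mul_of_memLp_two (memLp_indicator_Ioi_mul (p i).1 (p i).2 2)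
    (memLp_haarProd J m 2)
  simp only [disc_eq hp, sub_mul, sum_mul, mul_assoc (N : ℝ)]
  rw [integral_sub (integrable_finsetSum _ fun i _ ↦ hint i)
      ((integrable_mul_of_memLp_two (memLp_fst_mul_snd 2) (memLp_haarProd J m 2)).const_mul _),
    integral_finsetSum _ fun i _ ↦ hint i, integral_const_mul, hvol]
  simp only [hcount, ← mul_sum, sum_filter]
  ring

theorem haarEnergy_disc_ge (hp : ∀ i, p i ∈ unitSq) (J : ℕ × ℕ) {ρ : ℝ}
    (hρ : N * (1 / 2) ^ (J.1 + J.2) = ρ) :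
    1 / 256 * (ρ ^ 2 + (1 / 2) ^ (J.1 + J.2) *
      ∑ i, ((16 * tent J (p i)) ^ 2 - 2 * ρ * (16 * tent J (p i)))) ≤ haarEnergy (disc N p) J := by
  have hA : (1 / 2 : ℝ) ^ (J.1 + J.2) * 2 ^ (J.1 + J.2) = 1 := by
    rw [← mul_pow]
    norm_num
  have hbins := card_mul_sq_add_sum_le_sum_sq (s := univ)
    (fun i _ ↦ boxOf_mem_haarIndex J (hp i))
    (fun i _ ↦ mul_nonneg (distInt_nonneg _) (distInt_nonneg _))
    (V := fun i ↦ tent J (p i)) (ρ / 16)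
  calc 1 / 256 * (ρ ^ 2 + (1 / 2) ^ (J.1 + J.2) *
        ∑ i, ((16 * tent J (p i)) ^ 2 - 2 * ρ * (16 * tent J (p i))))
      = (1 / 2) ^ (J.1 + J.2) * (#(haarIndex J) * (ρ / 16) ^ 2 +
          ∑ i, (tent J (p i) ^ 2 - 2 * (ρ / 16) * tent J (p i))) := by
        rw [card_haarIndex]
        have hscale : ∑ i, ((16 * tent J (p i)) ^ 2 - 2 * ρ * (16 * tent J (p i))) =
            256 * ∑ i, (tent J (p i) ^ 2 - 2 * (ρ / 16) * tent J (p i)) := by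
          rw [mul_sum]
          exact sum_congr rfl fun i _ ↦ by ring
        rw [hscale]
        push_cast
        linear_combination -(ρ / 16) ^ 2 * hA
    _ ≤ (1 / 2) ^ (J.1 + J.2) *
          ∑ m ∈ haarIndex J, (∑ i with boxOf J (p i) = m, tent J (p i) - ρ / 16) ^ 2 := by
        gcongr
    _ = haarEnergy (disc N p) J := by
        rw [haarEnergy, mul_sum]
        refine sum_congr rfl fun m hm ↦ ?_
        rw [setIntegral_disc_mul_haarProd hp hm, hρ]
        field_simp

theorem sum_antidiagonal_add_le {E : ℕ × ℕ → ℝ} (hE : ∀ J, 0 ≤ E J) (K : ℕ) {n : ℕ} {rs : ℕ × ℕ}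
    (hrs : rs ∈ antidiagonal n) :
    ∑ J ∈ antidiagonal K, E (J + rs) ≤ ∑ J ∈ antidiagonal (K + n), E J := by
  have hshift := sum_map (antidiagonal K) (addRightEmbedding rs) E
  simp only [addRightEmbedding_apply] at hshift
  rw [← hshift]
  refine sum_le_sum_of_subset_of_nonneg (fun J hJ ↦ ?_) fun J _ _ ↦ hE J
  simp only [mem_map, addRightEmbedding_apply, HasAntidiagonal.mem_antidiagonal] at hJ hrs ⊢
  obtain ⟨I, hI, rfl⟩ := hJ
  simp only [Prod.fst_add, Prod.snd_add]
  omega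

/-- The weight `1 / (n + 1)` compensates for a shape being of the form `J + rs` in up to `n + 1`
ways. -/
theorem sum_antidiagonal_average_le {E : ℕ × ℕ → ℝ} (hE : ∀ J, 0 ≤ E J) (K M : ℕ) :
    ∑ J ∈ antidiagonal K, ∑ n ∈ range M, 1 / (n + 1 : ℝ) * ∑ rs ∈ antidiagonal n, E (J + rs) ≤
      ∑ n ∈ range M, ∑ J ∈ antidiagonal (K + n), E J := by
  rw [sum_comm]
  refine sum_le_sum fun n _ ↦ ?_
  rw [← mul_sum, sum_comm, one_div_mul_eq_div, div_le_iff₀' (by positivity)]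
  calc ∑ rs ∈ antidiagonal n, ∑ J ∈ antidiagonal K, E (J + rs)
      ≤ #(antidiagonal n) • ∑ J ∈ antidiagonal (K + n), E J :=
        sum_le_card_nsmul _ _ _ fun rs hrs ↦ sum_antidiagonal_add_le hE K hrs
    _ = (n + 1) * ∑ J ∈ antidiagonal (K + n), E J := by
        rw [Nat.card_antidiagonal, nsmul_eq_mul, Nat.cast_succ]

theorem sum_haarEnergy_antidiagonal_le {f : ℝ × ℝ → ℝ}
    (hf : MemLp f 2 (volume.restrict unitSq)) (K M : ℕ) :
    ∑ n ∈ range M, ∑ J ∈ antidiagonal (K + n), haarEnergy f J ≤ ∫ x in unitSq, f x ^ 2 := by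
  have hdisj : Set.PairwiseDisjoint (range M : Set ℕ) fun n ↦ antidiagonal (K + n) :=
    fun n _ n' _ hne ↦ disjoint_left.mpr fun J hJ hJ' ↦ by
      simp only [HasAntidiagonal.mem_antidiagonal] at hJ hJ'
      omega
  rw [← sum_biUnion hdisj]
  exact sum_haarEnergy_le hf _

theorem average_haarEnergy_disc_ge (hp : ∀ i, p i ∈ unitSq) (M : ℕ) (J : ℕ × ℕ) {ρ : ℝ}
    (hρ : N * (1 / 2) ^ (J.1 + J.2) = ρ) :
    1 / 256 * (ρ ^ 2 * ∑ n ∈ range M, (1 / 4) ^ n + (1 / 2) ^ (J.1 + J.2) *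
        ∑ i, pointEnergy M ρ (2 ^ J.1 * (p i).1) (2 ^ J.2 * (p i).2)) ≤
      ∑ n ∈ range M, 1 / (n + 1 : ℝ) * ∑ rs ∈ antidiagonal n, haarEnergy (disc N p) (J + rs) := by
  have htent (rs : ℕ × ℕ) (x : ℝ × ℝ) : tent (J + rs) x =
      distInt (2 ^ rs.1 * (2 ^ J.1 * x.1)) * distInt (2 ^ rs.2 * (2 ^ J.2 * x.2)) := by
    simp only [tent, Prod.fst_add, Prod.snd_add, pow_add, mul_assoc, mul_left_comm]
  have hshape (n : ℕ) (rs : ℕ × ℕ) (hrs : rs ∈ antidiagonal n) :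
      (J + rs).1 + (J + rs).2 = (J.1 + J.2) + n := by
    rw [Prod.fst_add, Prod.snd_add, add_add_add_comm, mem_antidiagonal.mp hrs]
  calc _ = ∑ n ∈ range M, 1 / (n + 1 : ℝ) * ∑ rs ∈ antidiagonal n,
        1 / 256 * ((ρ * (1 / 2) ^ n) ^ 2 + (1 / 2) ^ (J.1 + J.2 + n) *
          ∑ i, ((16 * tent (J + rs) (p i)) ^ 2
            - 2 * (ρ * (1 / 2) ^ n) * (16 * tent (J + rs) (p i)))) := by
        simp only [pointEnergy, htent]
        rw [sum_comm, mul_sum, mul_sum, ← sum_add_distrib, mul_sum]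
        refine sum_congr rfl fun n _ ↦ ?_
        rw [← mul_sum, ← mul_sum, sum_add_distrib, sum_const, Nat.card_antidiagonal, nsmul_eq_mul,
          ← mul_sum, sum_comm, mul_pow ρ, ← pow_mul, mul_comm n 2, pow_mul, pow_add]
        have hcancel : 1 / (n + 1 : ℝ) * (n + 1) = 1 := one_div_mul_cancel (by positivity)
        push_cast
        linear_combination -1 / 256 * ρ ^ 2 * (1 / 4) ^ n * hcancel
    _ ≤ _ := by
        gcongr with n _ rs hrs
        rw [← hshape n rs hrs]
        refine haarEnergy_disc_ge hp (J + rs) ?_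
        rw [hshape n rs hrs, pow_add, ← mul_assoc, hρ]

theorem integral_disc_sq_ge (hp : ∀ i, p i ∈ unitSq) {K M : ℕ} {ρ κ : ℝ}
    (hρ : N * (1 / 2) ^ K = ρ) (hκ : ∀ x y, κ ≤ pointEnergy M ρ x y) :
    (K + 1) / 256 * (ρ ^ 2 * ∑ n ∈ range M, (1 / 4) ^ n + ρ * κ) ≤
      ∫ x in unitSq, disc N p x ^ 2 := by
  refine le_trans ?_ ((sum_antidiagonal_average_le (haarEnergy_nonneg (disc N p)) K M).trans
    (sum_haarEnergy_antidiagonal_le (memLp_disc hp 2) K M))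
  have hshape (J : ℕ × ℕ) (hJ : J ∈ antidiagonal K) :
      1 / 256 * (ρ ^ 2 * ∑ n ∈ range M, (1 / 4) ^ n + ρ * κ) ≤ ∑ n ∈ range M, 1 / (n + 1 : ℝ) *
        ∑ rs ∈ antidiagonal n, haarEnergy (disc N p) (J + rs) := by
    obtain rfl := mem_antidiagonal.mp hJ
    refine le_trans ?_ (average_haarEnergy_disc_ge hp M J hρ)
    have hsum : N * κ ≤ ∑ i, pointEnergy M ρ (2 ^ J.1 * (p i).1) (2 ^ J.2 * (p i).2) := by
      simpa using card_nsmul_le_sum univ _ κ fun i _ ↦ hκ (2 ^ J.1 * (p i).1) (2 ^ J.2 * (p i).2)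
    rw [show ρ * κ = (1 / 2) ^ (J.1 + J.2) * (N * κ) by rw [← hρ]; ring]
    gcongr
  calc _ = #(antidiagonal K) • (1 / 256 * (ρ ^ 2 * ∑ n ∈ range M, (1 / 4) ^ n + ρ * κ)) := by
        rw [Nat.card_antidiagonal, nsmul_eq_mul]
        push_cast
        ring
    _ ≤ _ := card_nsmul_le_sum _ _ _ hshape

end LowerBound

/-! ### Sawtooth sums -/

theorem integral_comp_natCast_mul_of_periodic {g : ℝ → ℝ} (hg : g.Periodic 1)
    (hint : IntervalIntegrable g volume 0 1) {k : ℕ} (hk : k ≠ 0) :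
    ∫ u in (0 : ℝ)..1, g (k * u) = ∫ u in (0 : ℝ)..1, g u := by
  have hk' : (k : ℝ) ≠ 0 := Nat.cast_ne_zero.mpr hk
  have hmul := hg.intervalIntegral_add_zsmul_eq k 0 (hg.intervalIntegrable₀ one_ne_zero hint)
  simp only [zero_add, natCast_zsmul, nsmul_eq_mul, mul_one] at hmul
  rw [intervalIntegral.integral_comp_mul_left _ hk', mul_zero, mul_one, hmul, smul_eq_mul,
    inv_mul_cancel_left₀ hk']

theorem integral_comp_add_right_of_periodic {g : ℝ → ℝ} (hg : g.Periodic 1) (a : ℝ) :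
    ∫ u in (0 : ℝ)..1, g (u + a) = ∫ u in (0 : ℝ)..1, g u := by
  rw [intervalIntegral.integral_comp_add_right, add_comm 1 a, zero_add]
  simpa using hg.intervalIntegral_add_eq a 0

/-- The sawtooth function. -/
def saw (x : ℝ) : ℝ := Int.fract x - 1 / 2

theorem saw_add_intCast (x : ℝ) (k : ℤ) : saw (x + k) = saw x := by
  rw [saw, Int.fract_add_intCast, saw]

theorem periodic_saw : saw.Periodic 1 := fun x ↦ by simpa using saw_add_intCast x 1

theorem abs_saw_le_half (x : ℝ) : |saw x| ≤ 1 / 2 := by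
  rw [saw, abs_le]
  constructor <;> linarith [Int.fract_nonneg x, Int.fract_lt_one x]

theorem measurable_saw : Measurable saw := measurable_fract.sub_const _

theorem saw_add_saw_add_half (x : ℝ) : saw x + saw (x + 1 / 2) = saw (2 * x) := by
  have hx := Int.floor_add_fract x
  have h₀ := Int.fract_nonneg x
  have h₁ := Int.fract_lt_one x
  rcases lt_or_ge (Int.fract x) (1 / 2) with h | h
  · have hhalf : Int.fract (x + 1 / 2) = Int.fract x + 1 / 2 :=
      Int.fract_eq_iff.mpr ⟨by linarith, by linarith, ⌊x⌋, by linarith⟩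
    have hdouble : Int.fract (2 * x) = 2 * Int.fract x :=
      Int.fract_eq_iff.mpr ⟨by linarith, by linarith, 2 * ⌊x⌋, by push_cast; linarith⟩
    rw [saw, saw, saw, hhalf, hdouble]
    ring
  · have hhalf : Int.fract (x + 1 / 2) = Int.fract x - 1 / 2 :=
      Int.fract_eq_iff.mpr ⟨by linarith, by linarith, ⌊x⌋ + 1, by push_cast; linarith⟩
    have hdouble : Int.fract (2 * x) = 2 * Int.fract x - 1 :=
      Int.fract_eq_iff.mpr ⟨by linarith, by linarith, 2 * ⌊x⌋ + 1, by push_cast; linarith⟩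
    rw [saw, saw, saw, hhalf, hdouble]
    ring

theorem saw_add_saw_neg {x : ℝ} (hx : Int.fract x ≠ 0) : saw x + saw (-x) = 0 := by
  rw [saw, saw, Int.fract_neg hx]
  ring

theorem indicator_Ioi_fract (z : ℝ) {u : ℝ} (hu : u ∈ Set.Ico (0 : ℝ) 1) :
    (Set.Ioi (Int.fract z)).indicator 1 u = u + (saw (z - u) - saw z) := by
  have hz := Int.floor_add_fract z
  have h₀ := Int.fract_nonneg z
  have h₁ := Int.fract_lt_one z
  rcases lt_or_ge (Int.fract z) u with h | h
  · have hsub : Int.fract (z - u) = Int.fract z - u + 1 :=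
      Int.fract_eq_iff.mpr ⟨by linarith [hu.2], by linarith, ⌊z⌋ - 1, by push_cast; linarith⟩
    rw [Set.indicator_of_mem (Set.mem_Ioi.mpr h), Pi.one_apply, saw, saw, hsub]
    ring
  · have hsub : Int.fract (z - u) = Int.fract z - u :=
      Int.fract_eq_iff.mpr ⟨by linarith, by linarith [hu.1], ⌊z⌋, by linarith⟩
    rw [Set.indicator_of_notMem (Set.notMem_Ioi.mpr h), saw, saw, hsub]
    ring

/-- The sum of the sawtooth functions with jumps at the first `n` terms of `w`; up to a constant, it
is the local discrepancy of these terms modulo one. -/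
def sawSum (w : ℕ → ℝ) (n : ℕ) (u : ℝ) : ℝ := ∑ i ∈ range n, saw (w i - u)

/-- Modulo one, the terms `2i` and `2i + 1` of `w` are the two halves of its `i`-th term. This is
the self-similarity of the van der Corput sequence. -/
def IsDyadic (w : ℕ → ℝ) : Prop :=
  ∀ i, w (2 * i) = w i / 2 ∧ ∃ k : ℤ, w (2 * i + 1) = w i / 2 + 1 / 2 + k

section SawSum

variable {w : ℕ → ℝ}

theorem sawSum_succ (n : ℕ) (u : ℝ) : sawSum w (n + 1) u = sawSum w n u + saw (w n - u) :=
  sum_range_succ _ _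

theorem periodic_saw_sub (t : ℝ) : (fun u ↦ saw (t - u)).Periodic 1 := fun u ↦ by
  simp only [← sub_sub, periodic_saw.sub_eq]

theorem periodic_sawSum (n : ℕ) : (sawSum w n).Periodic 1 := fun u ↦
  sum_congr rfl fun i _ ↦ periodic_saw_sub (w i) u

theorem memLp_saw_sub (t : ℝ) : MemLp (fun u ↦ saw (t - u)) 2 (volume.restrict (Set.Ioc 0 1)) :=
  .of_bound (measurable_saw.comp (by fun_prop)).aestronglyMeasurable (1 / 2)
    (ae_of_all _ fun _ ↦ abs_saw_le_half _)

theorem memLp_sawSum (n : ℕ) : MemLp (sawSum w n) 2 (volume.restrict (Set.Ioc 0 1)) :=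
  memLp_finsetSum _ fun i _ ↦ memLp_saw_sub (w i)

theorem intervalIntegrable_mul_of_memLp_two {f g : ℝ → ℝ}
    (hf : MemLp f 2 (volume.restrict (Set.Ioc 0 1)))
    (hg : MemLp g 2 (volume.restrict (Set.Ioc 0 1))) :
    IntervalIntegrable (fun u ↦ f u * g u) volume 0 1 :=
  (intervalIntegrable_iff_integrableOn_Ioc_of_le zero_le_one).mpr
    (integrable_mul_of_memLp_two hf hg)

theorem sawSum_two_mul (hw : IsDyadic w) (n : ℕ) (u : ℝ) :
    sawSum w (2 * n) u = sawSum w n (2 * u) := by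
  induction n with
  | zero => simp [sawSum]
  | succ n ih =>
    obtain ⟨heven, k, hodd⟩ := hw n
    have hpair : saw (w (2 * n) - u) + saw (w (2 * n + 1) - u) = saw (w n - 2 * u) := by
      rw [heven, hodd, show w n / 2 + 1 / 2 + k - u = w n / 2 - u + 1 / 2 + k by ring,
        saw_add_intCast, saw_add_saw_add_half, mul_sub, mul_div_cancel₀ _ two_ne_zero]
    rw [mul_add_one, sawSum_succ, sawSum_succ, add_assoc, hpair, ih, sawSum_succ]

theorem integral_sawSum_two_mul_mul_saw (hw : IsDyadic w) (n : ℕ) (t : ℝ) :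
    ∫ u in (0 : ℝ)..1, sawSum w (2 * n) u * saw (t - u) =
      (∫ u in (0 : ℝ)..1, sawSum w n u * saw (2 * t - u)) / 2 := by
  have hshift : ∫ u in (0 : ℝ)..1, sawSum w (2 * n) u * saw (t + 1 / 2 - u) =
      ∫ u in (0 : ℝ)..1, sawSum w (2 * n) u * saw (t - u) := by
    have hhalf (u : ℝ) : sawSum w (2 * n) (u + 1 / 2) = sawSum w (2 * n) u := by
      rw [sawSum_two_mul hw, mul_add, mul_one_div_cancel two_ne_zero, periodic_sawSum,
        sawSum_two_mul hw]
    have htrans := integral_comp_add_right_of_periodic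
      ((periodic_sawSum (w := w) (2 * n)).mul (periodic_saw_sub (t + 1 / 2))) (1 / 2)
    simp only [Pi.mul_apply, hhalf, add_sub_add_right_eq_sub] at htrans
    exact htrans.symm
  have hdup (u : ℝ) : sawSum w (2 * n) u * saw (t - u) + sawSum w (2 * n) u * saw (t + 1 / 2 - u) =
      sawSum w n (2 * u) * saw (2 * t - 2 * u) := by
    rw [← mul_add, add_sub_right_comm, saw_add_saw_add_half, mul_sub, sawSum_two_mul hw]
  have hscale := integral_comp_natCast_mul_of_periodic
    ((periodic_sawSum (w := w) n).mul (periodic_saw_sub (2 * t)))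
    (intervalIntegrable_mul_of_memLp_two (memLp_sawSum _) (memLp_saw_sub _)) two_ne_zero
  simp only [Pi.mul_apply, Nat.cast_ofNat, ← hdup] at hscale
  rw [intervalIntegral.integral_add
    (intervalIntegrable_mul_of_memLp_two (memLp_sawSum _) (memLp_saw_sub _))
    (intervalIntegrable_mul_of_memLp_two (memLp_sawSum _) (memLp_saw_sub _)), hshift] at hscale
  linarith

theorem integral_sawSum_two_mul_sq (hw : IsDyadic w) (n : ℕ) :
    ∫ u in (0 : ℝ)..1, sawSum w (2 * n) u ^ 2 = ∫ u in (0 : ℝ)..1, sawSum w n u ^ 2 := by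
  simpa only [Pi.mul_apply, sawSum_two_mul hw, sq, Nat.cast_ofNat] using
    integral_comp_natCast_mul_of_periodic ((periodic_sawSum (w := w) n).mul (periodic_sawSum n))
      (intervalIntegrable_mul_of_memLp_two (memLp_sawSum _) (memLp_sawSum _)) two_ne_zero

theorem abs_integral_saw_mul_saw_le (s t : ℝ) :
    |∫ u in (0 : ℝ)..1, saw (s - u) * saw (t - u)| ≤ 1 / 4 := by
  have hbound := intervalIntegral.norm_integral_le_of_norm_le_const (a := 0) (b := 1) (C := 1 / 4)
    (f := fun u ↦ saw (s - u) * saw (t - u)) fun u _ ↦ ?_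
  · simpa using hbound
  · rw [norm_mul, show (1 / 4 : ℝ) = 1 / 2 * (1 / 2) by norm_num]
    exact mul_le_mul (abs_saw_le_half _) (abs_saw_le_half _) (norm_nonneg _) (by norm_num)

theorem integral_sawSum_mul_saw_two_mul (hw : IsDyadic w) (n : ℕ) :
    ∫ u in (0 : ℝ)..1, sawSum w (2 * n) u * saw (w (2 * n) - u) =
      (∫ u in (0 : ℝ)..1, sawSum w n u * saw (w n - u)) / 2 := by
  rw [integral_sawSum_two_mul_mul_saw hw, (hw n).1, mul_div_cancel₀ _ two_ne_zero]

theorem integral_sawSum_mul_saw_two_mul_add_one (hw : IsDyadic w) (n : ℕ) :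
    ∫ u in (0 : ℝ)..1, sawSum w (2 * n + 1) u * saw (w (2 * n + 1) - u) =
      (∫ u in (0 : ℝ)..1, sawSum w n u * saw (w n - u)) / 2 +
        ∫ u in (0 : ℝ)..1, saw (w (2 * n) - u) * saw (w (2 * n + 1) - u) := by
  obtain ⟨-, k, hodd⟩ := hw n
  have hperiod (u : ℝ) : saw (2 * w (2 * n + 1) - u) = saw (w n - u) := by
    rw [hodd, ← saw_add_intCast (w n - u) (2 * k + 1)]
    push_cast
    ring_nf
  simp only [sawSum_succ, add_mul]
  rw [intervalIntegral.integral_add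
      (intervalIntegrable_mul_of_memLp_two (memLp_sawSum _) (memLp_saw_sub _))
      (intervalIntegrable_mul_of_memLp_two (memLp_saw_sub _) (memLp_saw_sub _)),
    integral_sawSum_two_mul_mul_saw hw]
  simp only [hperiod]

theorem abs_integral_sawSum_mul_saw_le (hw : IsDyadic w) (n : ℕ) :
    |∫ u in (0 : ℝ)..1, sawSum w n u * saw (w n - u)| ≤ 1 / 2 := by
  induction n using Nat.strong_induction_on with
  | _ n ih =>
    rcases Nat.even_or_odd' n with ⟨m, rfl | rfl⟩
    · rcases m.eq_zero_or_pos with rfl | hm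
      · simp [sawSum]
      · rw [integral_sawSum_mul_saw_two_mul hw, abs_div, abs_two]
        linarith [ih m (by lia)]
    · rw [integral_sawSum_mul_saw_two_mul_add_one hw]
      refine (abs_add_le _ _).trans ?_
      rw [abs_div, abs_two]
      linarith [ih m (by lia), abs_integral_saw_mul_saw_le (w (2 * m)) (w (2 * m + 1))]

theorem integral_sawSum_succ_sq (n : ℕ) :
    ∫ u in (0 : ℝ)..1, sawSum w (n + 1) u ^ 2 = (∫ u in (0 : ℝ)..1, sawSum w n u ^ 2) +
      2 * (∫ u in (0 : ℝ)..1, sawSum w n u * saw (w n - u)) +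
        ∫ u in (0 : ℝ)..1, saw (w n - u) * saw (w n - u) := by
  have hsq := intervalIntegrable_mul_of_memLp_two (memLp_sawSum (w := w) n)
    (memLp_sawSum (w := w) n)
  have hcross := (intervalIntegrable_mul_of_memLp_two (memLp_sawSum (w := w) n)
    (memLp_saw_sub (w n))).const_mul 2
  have hsaw := intervalIntegrable_mul_of_memLp_two (memLp_saw_sub (w n)) (memLp_saw_sub (w n))
  simp only [sawSum_succ, add_sq, mul_assoc]
  simp only [sq]
  rw [intervalIntegral.integral_add (hsq.add hcross) hsaw, intervalIntegral.integral_add hsq hcross,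
    intervalIntegral.integral_const_mul]

theorem integral_sawSum_sq_le (hw : IsDyadic w) {L n : ℕ} (hn : n < 2 ^ L) :
    ∫ u in (0 : ℝ)..1, sawSum w n u ^ 2 ≤ 3 / 4 * L := by
  induction L generalizing n with
  | zero => simp [sawSum, Nat.lt_one_iff.mp hn]
  | succ L ih =>
    push_cast
    rcases Nat.even_or_odd' n with ⟨m, rfl | rfl⟩
    · rw [integral_sawSum_two_mul_sq hw]
      linarith [ih (show m < 2 ^ L by lia)]
    · rw [integral_sawSum_succ_sq, integral_sawSum_two_mul_sq hw,
        integral_sawSum_mul_saw_two_mul hw]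
      linarith [ih (show m < 2 ^ L by lia), le_of_abs_le (abs_integral_sawSum_mul_saw_le hw m),
        le_of_abs_le (abs_integral_saw_mul_saw_le (w (2 * m)) (w (2 * m)))]

end SawSum

/-! ### Symmetrized van der Corput sets -/

/-- The van der Corput sequence: the binary digits of `n` are reflected at the binary point. -/
def vdc : ℕ → ℝ
  | 0 => 0
  | n + 1 => vdc ((n + 1) / 2) / 2 + ((n + 1) % 2 : ℕ) / 2
decreasing_by omega

theorem vdc_zero : vdc 0 = 0 := by rw [vdc]

theorem vdc_eq (n : ℕ) : vdc n = vdc (n / 2) / 2 + (n % 2 : ℕ) / 2 := by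
  cases n with
  | zero => simp [vdc_zero]
  | succ n => rw [vdc]

theorem vdc_two_mul (i : ℕ) : vdc (2 * i) = vdc i / 2 := by
  rw [vdc_eq, Nat.mul_div_cancel_left _ two_pos, Nat.mul_mod_right]
  simp

theorem vdc_two_mul_add_one (i : ℕ) : vdc (2 * i + 1) = vdc i / 2 + 1 / 2 := by
  rw [vdc_eq, show (2 * i + 1) / 2 = i by lia, show (2 * i + 1) % 2 = 1 by lia, Nat.cast_one]

theorem isDyadic_vdc : IsDyadic vdc := fun i ↦
  ⟨vdc_two_mul i, 0, by rw [vdc_two_mul_add_one, Int.cast_zero, add_zero]⟩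

theorem isDyadic_neg_vdc : IsDyadic (-vdc) := fun i ↦
  ⟨by rw [Pi.neg_apply, Pi.neg_apply, vdc_two_mul, neg_div], -1, by
    rw [Pi.neg_apply, Pi.neg_apply, vdc_two_mul_add_one]
    push_cast
    ring⟩

theorem vdc_mem_Ioo {n : ℕ} (hn : n ≠ 0) : vdc n ∈ Set.Ioo 0 1 := by
  induction n using Nat.strong_induction_on with
  | _ n ih =>
    rcases Nat.even_or_odd' n with ⟨i, rfl | rfl⟩
    · obtain ⟨h₀, h₁⟩ := ih i (by lia) (by lia)
      rw [vdc_two_mul]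
      constructor <;> linarith
    · rw [vdc_two_mul_add_one]
      rcases eq_or_ne i 0 with rfl | hi
      · norm_num [vdc_zero]
      · obtain ⟨h₀, h₁⟩ := ih i (by lia) hi
        constructor <;> linarith

/-- The van der Corput sequence interlaced with its reflection at the origin. Its terms matter only
modulo one. -/
def symVdc (k : ℕ) : ℝ := if Even k then vdc (k / 2) else -vdc (k / 2)

theorem sum_range_two_mul_symVdc (f : ℝ → ℝ) (m : ℕ) :
    ∑ k ∈ range (2 * m), f (symVdc k) = ∑ i ∈ range m, (f (vdc i) + f (-vdc i)) := by
  induction m with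
  | zero => simp
  | succ m ih =>
    have heven : symVdc (2 * m) = vdc m := by simp [symVdc]
    have hodd : symVdc (2 * m + 1) = -vdc m := by
      simp [symVdc, show (2 * m + 1) / 2 = m by lia]
    rw [mul_add_one, sum_range_succ, sum_range_succ, ih, heven, hodd, sum_range_succ, add_assoc]

theorem abs_sum_saw_symVdc_le (m : ℕ) : |∑ k ∈ range (2 * m), saw (symVdc k)| ≤ 1 := by
  rw [sum_range_two_mul_symVdc]
  cases m with
  | zero => simp
  | succ m =>
    have hcancel (i : ℕ) : saw (vdc (i + 1)) + saw (-vdc (i + 1)) = 0 := by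
      obtain ⟨h₀, h₁⟩ := vdc_mem_Ioo i.succ_ne_zero
      exact saw_add_saw_neg (by rw [Int.fract_eq_self.mpr ⟨h₀.le, h₁⟩]; exact h₀.ne')
    rw [sum_range_succ', sum_eq_zero fun i _ ↦ hcancel i, vdc_zero]
    norm_num [saw]

theorem abs_sum_range_sub_sum_range_two_mul_half_le {f : ℕ → ℝ} {c : ℝ} (hf : ∀ k, |f k| ≤ c)
    (n : ℕ) : |∑ k ∈ range n, f k - ∑ k ∈ range (2 * (n / 2)), f k| ≤ c := by
  rcases Nat.even_or_odd' n with ⟨m, rfl | rfl⟩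
  · simpa using (abs_nonneg _).trans (hf 0)
  · rw [show (2 * m + 1) / 2 = m by lia, sum_range_succ, add_sub_cancel_left]
    exact hf _

/-- The symmetrized van der Corput set with `N` points: `symVdc` is the second coordinate, the first
one is equidistant. -/
def symVdcSet (N : ℕ) (k : Fin N) : ℝ × ℝ := (k / N, Int.fract (symVdc k))

theorem symVdcSet_mem_unitSq {N : ℕ} (k : Fin N) : symVdcSet N k ∈ unitSq := by
  have hk : (k : ℝ) < N := by exact_mod_cast k.isLt
  exact ⟨⟨div_nonneg k.val.cast_nonneg N.cast_nonneg,
    (div_lt_one (k.val.cast_nonneg.trans_lt hk)).mpr hk⟩,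
    Int.fract_nonneg _, Int.fract_lt_one _⟩

section UpperBound

variable {N : ℕ}

theorem disc_symVdcSet {x : ℝ × ℝ} (hx : x ∈ unitSq) :
    disc N (symVdcSet N) x = (⌈N * x.1⌉₊ - N * x.1) * x.2 +
      (∑ k ∈ range ⌈N * x.1⌉₊, saw (symVdc k - x.2) - ∑ k ∈ range ⌈N * x.1⌉₊, saw (symVdc k)) := by
  have hle : ⌈N * x.1⌉₊ ≤ N := Nat.ceil_le.mpr (mul_le_of_le_one_right N.cast_nonneg hx.1.2.le)
  have hfst (k : Fin N) : (Set.Ioi (k / N : ℝ)).indicator (1 : ℝ → ℝ) x.1 =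
      if k < ⌈N * x.1⌉₊ then 1 else 0 := by
    have hN : (0 : ℝ) < N := by exact_mod_cast k.pos
    simp only [Set.indicator_apply, Set.mem_Ioi, div_lt_iff₀' hN, Nat.lt_ceil, Pi.one_apply]
  simp only [disc_eq symVdcSet_mem_unitSq, symVdcSet, hfst, indicator_Ioi_fract _ hx.2, ite_mul,
    one_mul, zero_mul]
  rw [Fin.sum_univ_eq_sum_range
      (fun k ↦ if k < ⌈N * x.1⌉₊ then x.2 + (saw (symVdc k - x.2) - saw (symVdc k)) else 0) N,
    ← sum_filter, show {k ∈ range N | k < ⌈N * x.1⌉₊} = range ⌈N * x.1⌉₊ by grind,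
    sum_add_distrib, sum_const, card_range, nsmul_eq_mul, sum_sub_distrib]
  ring

theorem abs_disc_symVdcSet_sub_le {x : ℝ × ℝ} (hx : x ∈ unitSq) :
    |disc N (symVdcSet N) x -
      (sawSum vdc (⌈N * x.1⌉₊ / 2) x.2 + sawSum (-vdc) (⌈N * x.1⌉₊ / 2) x.2)| ≤ 3 := by
  have hceil : |(⌈N * x.1⌉₊ - N * x.1) * x.2| ≤ 1 := by
    have hpos : 0 ≤ N * x.1 := mul_nonneg N.cast_nonneg hx.1.1
    rw [abs_mul]
    refine mul_le_one₀ ?_ (abs_nonneg _) (abs_le.mpr ⟨by linarith [hx.2.1], hx.2.2.le⟩)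
    rw [abs_le]
    constructor <;> linarith [Nat.le_ceil (N * x.1), Nat.ceil_lt_add_one hpos]
  have hsym := sum_range_two_mul_symVdc (fun z ↦ saw (z - x.2)) (⌈N * x.1⌉₊ / 2)
  rw [sum_add_distrib] at hsym
  have hodd₁ := abs_sum_range_sub_sum_range_two_mul_half_le
    (fun k ↦ abs_saw_le_half (symVdc k - x.2)) ⌈N * x.1⌉₊
  have hodd₂ := abs_sum_range_sub_sum_range_two_mul_half_le
    (fun k ↦ abs_saw_le_half (symVdc k)) ⌈N * x.1⌉₊
  have hmean := abs_sum_saw_symVdc_le (⌈N * x.1⌉₊ / 2)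
  simp only [disc_symVdcSet hx, sawSum, Pi.neg_apply]
  rw [abs_le] at *
  constructor <;> linarith

theorem integral_disc_symVdcSet_slice_le {L : ℕ} (hN : N < 2 ^ L) {a : ℝ}
    (ha : a ∈ Set.Ico (0 : ℝ) 1) :
    ∫ u in Set.Ico 0 1, disc N (symVdcSet N) (a, u) ^ 2 ≤ 18 + 6 * L := by
  set m := ⌈N * a⌉₊ / 2
  have hm : m < 2 ^ L := (Nat.div_le_self _ _).trans_lt
    ((Nat.ceil_le.mpr (mul_le_of_le_one_right N.cast_nonneg ha.2.le)).trans_lt hN)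
  have hsq (w : ℕ → ℝ) : IntervalIntegrable (fun u ↦ 4 * sawSum w m u ^ 2) volume 0 1 := by
    simpa only [sq] using (intervalIntegrable_mul_of_memLp_two (memLp_sawSum (w := w) m)
      (memLp_sawSum m)).const_mul 4
  have hbound : IntervalIntegrable
      (fun u ↦ 18 + 4 * sawSum vdc m u ^ 2 + 4 * sawSum (-vdc) m u ^ 2) volume 0 1 :=
    (intervalIntegrable_const.add (hsq vdc)).add (hsq (-vdc))
  calc ∫ u in Set.Ico 0 1, disc N (symVdcSet N) (a, u) ^ 2
      ≤ ∫ u in Set.Ico 0 1, (18 + 4 * sawSum vdc m u ^ 2 + 4 * sawSum (-vdc) m u ^ 2) := by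
        refine integral_mono_of_nonneg (ae_of_all _ fun u ↦ sq_nonneg _) ?_
          (ae_restrict_of_forall_mem measurableSet_Ico fun u hu ↦ ?_)
        · exact (intervalIntegrable_iff_integrableOn_Ico_of_le zero_le_one).mp hbound
        · have hclose := abs_le.mp (abs_disc_symVdcSet_sub_le (N := N) (x := (a, u)) ⟨ha, hu⟩)
          nlinarith [sq_nonneg (sawSum vdc m u - sawSum (-vdc) m u),
            sq_nonneg (disc N (symVdcSet N) (a, u) -
              2 * (sawSum vdc m u + sawSum (-vdc) m u))]
    _ = 18 + 4 * (∫ u in (0 : ℝ)..1, sawSum vdc m u ^ 2) +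
          4 * ∫ u in (0 : ℝ)..1, sawSum (-vdc) m u ^ 2 := by
        rw [integral_Ico_eq_integral_Ioc, ← intervalIntegral.integral_of_le zero_le_one,
          intervalIntegral.integral_add (intervalIntegrable_const.add (hsq vdc)) (hsq (-vdc)),
          intervalIntegral.integral_add intervalIntegrable_const (hsq vdc)]
        simp
    _ ≤ 18 + 6 * L := by
        linarith [integral_sawSum_sq_le isDyadic_vdc hm, integral_sawSum_sq_le isDyadic_neg_vdc hm]

theorem integral_disc_symVdcSet_sq_le {L : ℕ} (hN : N < 2 ^ L) :
    ∫ x in unitSq, disc N (symVdcSet N) x ^ 2 ≤ 18 + 6 * L := by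
  have hint := (memLp_disc (symVdcSet_mem_unitSq (N := N)) 2).integrable_sq
  calc ∫ x in unitSq, disc N (symVdcSet N) x ^ 2
      = ∫ a in Set.Ico 0 1, ∫ u in Set.Ico 0 1, disc N (symVdcSet N) (a, u) ^ 2 :=
        setIntegral_prod _ hint
    _ ≤ ∫ _ in Set.Ico (0 : ℝ) 1, (18 + 6 * L : ℝ) :=
        integral_mono_of_nonneg (ae_of_all _ fun a ↦ integral_nonneg fun u ↦ sq_nonneg _)
          (integrable_const _)
          (ae_restrict_of_forall_mem measurableSet_Ico fun a ha ↦
            integral_disc_symVdcSet_slice_le hN ha)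
    _ = 18 + 6 * L := by simp

end UpperBound

theorem l2disc_mul_log_rpow {N : ℕ} (p : Fin N → ℝ × ℝ) :
    L2disc N p * Real.log N ^ (-(1 : ℝ) / 2) =
      √((∫ x in unitSq, disc N p x ^ 2) / Real.log N) := by
  have hlog : 0 ≤ Real.log N := Real.log_natCast_nonneg N
  rw [L2disc, Real.sqrt_div' _ hlog, neg_div, Real.rpow_neg hlog, ← Real.sqrt_eq_rpow,
    div_eq_mul_inv]

theorem l2disc_symVdcSet_mul_log_rpow_le {N : ℕ} (hN : 3 ≤ N) :
    L2disc N (symVdcSet N) * Real.log N ^ (-(1 : ℝ) / 2) ≤ 6 := by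
  have hN' : (3 : ℝ) ≤ N := by exact_mod_cast hN
  have hlog : 1 ≤ Real.log N := by
    rw [Real.le_log_iff_exp_le (by linarith)]
    linarith [Real.exp_one_lt_d9]
  have hlogb : Nat.log 2 N * Real.log 2 ≤ Real.log N := by
    rw [← Real.log_pow]
    exact Real.log_le_log (by positivity) (by exact_mod_cast Nat.pow_log_le_self 2 (by lia))
  have henergy := integral_disc_symVdcSet_sq_le (Nat.lt_pow_succ_log_self one_lt_two N)
  rw [l2disc_mul_log_rpow, Real.sqrt_le_left (by norm_num), div_le_iff₀ (by linarith)]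
  push_cast at henergy
  nlinarith [Real.log_two_gt_d9, (Nat.log 2 N).cast_nonneg (α := ℝ)]

theorem le_l2disc_mul_log_rpow (k : ℕ) {p : Fin (5 * 2 ^ k) → ℝ × ℝ} (hp : ∀ i, p i ∈ unitSq) :
    0.061 ≤ L2disc (5 * 2 ^ k) p * Real.log (5 * 2 ^ k : ℕ) ^ (-(1 : ℝ) / 2) := by
  have hρ : (5 * 2 ^ k : ℕ) * (1 / 2 : ℝ) ^ (k + 2) = 5 / 4 := by
    push_cast
    rw [pow_add, one_div_pow]
    field_simp
    norm_num
  have henergy := integral_disc_sq_ge hp hρ neg_le_pointEnergy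
  have hlog : Real.log (5 * 2 ^ k : ℕ) ≤ (k + 3) * Real.log 2 := by
    rw [show (k + 3 : ℝ) = (k + 3 : ℕ) by push_cast; rfl, ← Real.log_pow]
    refine Real.log_le_log (by positivity) ?_
    push_cast
    rw [pow_add]
    linarith [pow_pos (two_pos (α := ℝ)) k]
  have hlog_pos : 0 < Real.log (5 * 2 ^ k : ℕ) :=
    Real.log_pos (by exact_mod_cast one_lt_mul_of_lt_of_le (by norm_num) Nat.one_le_two_pow)
  rw [l2disc_mul_log_rpow, Real.le_sqrt' (by norm_num), le_div_iff₀ hlog_pos]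
  norm_num [sum_range_succ] at henergy
  nlinarith [Real.log_two_lt_d9, k.cast_nonneg (α := ℝ)]

end

/-- `limsup_{N→∞} inf_P ‖D_P | L₂‖·(log N)^{-1/2} ≥ 0.061`, the infimum being
over all `N`-point sets `P ⊂ [0,1)²`. -/
theorem limsup_inf_l2disc_ge :
    0.061 ≤ Filter.limsup (fun N : ℕ =>
      sInf { t : ℝ | ∃ p : Fin N → ℝ × ℝ, (∀ i, p i ∈ unitSq) ∧
        t = L2disc N p * Real.log N ^ (-(1:ℝ)/2) }) Filter.atTop := by
  refine Filter.le_limsup_of_frequently_le (Filter.frequently_atTop.mpr fun k ↦ ?_) ?_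
  · refine ⟨5 * 2 ^ k, by linarith [k.lt_two_pow_self], ?_⟩
    refine le_csInf ⟨_, symVdcSet _, symVdcSet_mem_unitSq, rfl⟩ ?_
    rintro _ ⟨p, hp, rfl⟩
    exact le_l2disc_mul_log_rpow k hp
  · refine Filter.isBoundedUnder_of_eventually_le (a := 6) ?_
    filter_upwards [Filter.eventually_ge_atTop 3] with N hN
    refine le_trans (csInf_le ⟨0, ?_⟩ ⟨symVdcSet N, symVdcSet_mem_unitSq, rfl⟩)
      (l2disc_symVdcSet_mul_log_rpow_le hN)
    rintro _ ⟨p, -, rfl⟩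
    exact l2disc_mul_log_rpow p ▸ Real.sqrt_nonneg _

end
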